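/- For every n ≥ 1, the statistics basc and des_B are equidistributed on X_n: for every k ≥ 0, #{w ∈ X_n : basc(w) = k} = #{w ∈ X_n : des_B(w) = k}. Equivalently, Ψ_{C_n}(t) = Σ_{w ∈ X_n} t^{des_B(w)}. -/

import Mathlib

/-!
Both statistics count marked *gaps* `0, 1, …, n` of the window `w₁ ⋯ wₙ` (gap `g` lies between
`w_g` and `w_{g+1}`): a gap is marked for `des_B` if it carries a descent (gap `n` never does), and
for `basc` if it carries a big ascent, where gap `0` means `2 ≤ w₁` and gap `n` means `wₙ ≤ -2`.

Every `u ∈ X_{n+1}` with `n ≥ 1` arises uniquely from some `w ∈ X_n` by inserting `n+1` or `-(n+1)`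
into one of the `n+1` gaps (`exists_insCycle`, `insCycle_injective`, `inXn_mul_insCycle`). The
insertion destroys one gap and creates two. For both statistics exactly one of the two new gaps is
marked, apart from a single exceptional insertion, into an unmarked gap, for which neither is
(`EulerianGaps`): for `des_B` it appends `n+1` at the end; for `basc` it places `n+1` directly after
`n`, or `-(n+1)` directly before `-n`, whichever of `±n` occurs in the window. Hence among the
`2(n+1)` insertions into an element with statistic `k`, exactly `2k+1` preserve the statistic and
the others raise it by one (`sum_insert`). This recurrence, together with the common value `0` on
`X_1 = {id}`, determines the distribution (`sum_gapStat`).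

The counting is done with sums `∑_{w ∈ X_n} G (stat w)` of arbitrary test functions `G`: the
recurrence then becomes an operator `eulerStep` on test functions.
-/

open scoped Classical

/-- A signed permutation of length `n`: a permutation `w` of `ℤ` with
`w(-i) = -w(i)` that fixes every integer of absolute value greater than `n`. -/
def IsSignedPerm (n : ℕ) (w : Equiv.Perm ℤ) : Prop :=
  (∀ i : ℤ, w (-i) = - w i) ∧ ∀ i : ℤ, (n : ℤ) < |i| → w i = i

/-- Membership in `X_n := {w ∈ 𝔅_n : w⁻¹(1) > 0}`. -/
def InXn (n : ℕ) (w : Equiv.Perm ℤ) : Prop :=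
  IsSignedPerm n w ∧ 0 < w.symm 1

/-- The type B descent number `des_B(w) = #{i ∈ {0,…,n-1} : w_i > w_{i+1}}`,
with the convention `w_0 = 0` (automatic, since a signed permutation fixes `0`). -/
noncomputable def desB (n : ℕ) (w : Equiv.Perm ℤ) : ℕ :=
  ((Finset.range n).filter fun i => w ((i : ℤ) + 1) < w (i : ℤ)).card

/-- The flag-excedance `fexc(w) = 2·#{i : w_i > i} + #{i : w_i < 0}`. -/
noncomputable def fexc (n : ℕ) (w : Equiv.Perm ℤ) : ℕ :=
  2 * ((Finset.Icc (1 : ℤ) (n : ℤ)).filter fun i => i < w i).card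
    + ((Finset.Icc (1 : ℤ) (n : ℤ)).filter fun i => w i < 0).card

/-- The cyclic successor on `{-n,…,-1,1,…,n}` (with `(-1)⁺ = 1` and `n⁺ = -n`). -/
def csucc (n : ℕ) (i : ℤ) : ℤ :=
  if i = -1 then 1 else if i = (n : ℤ) then -(n : ℤ) else i + 1

/-- The circular descent set `CDes(w) = {i ∈ {-n,…,-1,1,…,n} : w(i) > w(i⁺)}`. -/
noncomputable def cdesSet (n : ℕ) (w : Equiv.Perm ℤ) : Finset ℤ :=
  (Finset.Icc (-(n : ℤ)) (n : ℤ)).filter fun i => i ≠ 0 ∧ w (csucc n i) < w i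

/-- The circular descent number `cdes(w) = |CDes(w)|`. -/
noncomputable def cdes (n : ℕ) (w : Equiv.Perm ℤ) : ℕ := (cdesSet n w).card

/-- `a ≪ b`: there is a nonzero integer strictly between `a` and `b`. -/
def Lll (a b : ℤ) : Prop := ∃ c : ℤ, c ≠ 0 ∧ a < c ∧ c < b

/-- The big ascent number `basc(w) = |BAsc(w)|`, where `BAsc(w) ⊆ {-1,1,…,n}`:
`-1 ∈ BAsc(w)` iff `w_1 ≥ 2`; for `1 ≤ i ≤ n-1`, `i ∈ BAsc(w)` iff `w_i ≪ w_{i+1}`;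
and `n ∈ BAsc(w)` iff `w_n ≤ -2`. -/
noncomputable def basc (n : ℕ) (w : Equiv.Perm ℤ) : ℕ :=
  ((insert (-1 : ℤ) (Finset.Icc (1 : ℤ) (n : ℤ))).filter fun i =>
    if i = -1 then 2 ≤ w 1
    else if i = (n : ℤ) then w (n : ℤ) ≤ -2
    else Lll (w i) (w (i + 1))).card

/-- `L'_{n,k}(r)`: the number of half-integer points in the `r`-th dilate of the
half-open type C hypersimplex `Δ'_{C_n,k}`, in the `y`-coordinates. -/
noncomputable def Lp (n k r : ℕ) : ℕ :=
  if k = 1 then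
    Set.ncard {y : Fin n → ℤ |
      (∀ j, 0 ≤ y j ∧ y j ≤ 2 * (r : ℤ)) ∧ (∀ j : Fin n, (j : ℕ) = 0 → y j ≤ (r : ℤ)) ∧
      0 ≤ ∑ j, y j ∧ ∑ j, y j ≤ (r : ℤ)}
  else
    Set.ncard {y : Fin n → ℤ |
      (∀ j, 0 ≤ y j ∧ y j ≤ 2 * (r : ℤ)) ∧ (∀ j : Fin n, (j : ℕ) = 0 → y j ≤ (r : ℤ)) ∧
      ((k : ℤ) - 1) * r < ∑ j, y j ∧ ∑ j, y j ≤ (k : ℤ) * r}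

/-- `L_{n,k}(r)`: the number of half-integer points in the `r`-th dilate of the
closed type C hypersimplex `Δ_{C_n,k}`, in the `y`-coordinates. -/
noncomputable def Lc (n k r : ℕ) : ℕ :=
  Set.ncard {y : Fin n → ℤ |
    (∀ j, 0 ≤ y j ∧ y j ≤ 2 * (r : ℤ)) ∧ (∀ j : Fin n, (j : ℕ) = 0 → y j ≤ (r : ℤ)) ∧
    ((k : ℤ) - 1) * r ≤ ∑ j, y j ∧ ∑ j, y j ≤ (k : ℤ) * r}

/-- `ψ_{n,k} = #{w ∈ X_n : basc(w) = k}`. -/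
noncomputable def psiN (n k : ℕ) : ℕ :=
  {w : Equiv.Perm ℤ | InXn n w ∧ basc n w = k}.ncard

/-- `ψ_{n,k}` with an integer index (`0` for negative `k`). -/
noncomputable def psiZ (n : ℕ) (k : ℤ) : ℕ :=
  {w : Equiv.Perm ℤ | InXn n w ∧ (basc n w : ℤ) = k}.ncard

/-- `Ψ_{C_n}(t) = Σ_k ψ_{n,k} t^k ∈ ℤ[t]`. -/
noncomputable def PsiC (n : ℕ) : Polynomial ℤ :=
  ∑ᶠ k : ℕ, (psiN n k : Polynomial ℤ) * Polynomial.X ^ k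

/-- `Ψ_{C_n}(t)` with rational coefficients. -/
noncomputable def PsiCQ (n : ℕ) : Polynomial ℚ :=
  ∑ᶠ k : ℕ, (psiN n k : Polynomial ℚ) * Polynomial.X ^ k

/-- The descent number of a permutation of `{1,…,m}`. -/
noncomputable def desA (m : ℕ) (σ : Equiv.Perm (Fin m)) : ℕ :=
  (Finset.univ.filter fun i : Fin m =>
    ∃ h : (i : ℕ) + 1 < m, σ ⟨(i : ℕ) + 1, h⟩ < σ i).card

/-- The classical (type A) Eulerian polynomial `E_m^A(t) = Σ_{σ ∈ S_m} t^{des σ}`. -/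
noncomputable def EulerianA (m : ℕ) : Polynomial ℚ :=
  ∑ σ : Equiv.Perm (Fin m), Polynomial.X ^ desA m σ

/-- The relation `u ⇀ w` on `X_n`. -/
def covRel (n : ℕ) (u w : Equiv.Perm ℤ) : Prop :=
  InXn n u ∧ InXn n w ∧
    ((2 ≤ w 1 ∧ u = w * Equiv.swap (1 : ℤ) (-1)) ∨
     (∃ i : ℤ, 1 ≤ i ∧ i ≤ (n : ℤ) - 1 ∧ Lll (w i) (w (i + 1)) ∧
        u = w * (Equiv.swap i (i + 1) * Equiv.swap (-i) (-(i + 1)))) ∨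
     (w (n : ℤ) ≤ -2 ∧ u = w * Equiv.swap (n : ℤ) (-(n : ℤ))))

/-- The `i`-th coordinate (`1 ≤ i ≤ n`) of the vertex `v^j(w)` (`1 ≤ j ≤ n+1`):
`v^{n+1}_i(w) = #({1,…,i-1} ∩ CDes(w⁻¹))` and `v^j = v^{j+1} + ½ e_{w_j}`. -/
noncomputable def vcoord (n : ℕ) (w : Equiv.Perm ℤ) (j : ℕ) (i : ℕ) : ℚ :=
  ((Finset.Icc (1 : ℤ) ((i : ℤ) - 1) ∩ cdesSet n w.symm).card : ℚ)
    + (1 / 2) * ∑ m ∈ Finset.Icc (j : ℤ) (n : ℤ),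
        (if w m = (i : ℤ) then (1 : ℚ) else if w m = -(i : ℤ) then -1 else 0)

/-- `u` is the image `τ_n(w)`: in window notation `u = 1 w'_1 ⋯ w'_n`, where
`w'_i = w_i + 1` if `w_i > 0` and `w'_i = w_i - 1` if `w_i < 0`. -/
def isTau (n : ℕ) (w u : Equiv.Perm ℤ) : Prop :=
  u 1 = 1 ∧ ∀ i : ℤ, 1 ≤ i → i ≤ (n : ℤ) →
    u (i + 1) = if 0 < w i then w i + 1 else w i - 1

/-! ### Insertion of the entry `±(n+1)` into a window -/

/-- The value of `±(n+1)` selected by the sign `s`. -/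
def insVal (n : ℕ) (s : Bool) : ℤ := if s then (n : ℤ) + 1 else -((n : ℤ) + 1)

lemma insVal_eq (n : ℕ) (s : Bool) : insVal n s = (n : ℤ) + 1 ∨ insVal n s = -((n : ℤ) + 1) := by
  cases s <;> simp [insVal]

/-- The odd function on `ℤ` that sends `p` to `m`, moves the interval `(p, N]` down by one, and fixes
every other nonnegative integer. -/
def slide (p N m i : ℤ) : ℤ :=
  if i = p then m
  else if i = -p then -m
  else if -p < i ∧ i < p then i
  else if N < i ∨ i < -N then i
  else if 0 < i then i - 1 else i + 1

/-- The inverse of `slide p N m` when `m = ±N` and `1 ≤ p ≤ N`. -/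
def unslide (p N m i : ℤ) : ℤ :=
  if i = m then p
  else if i = -m then -p
  else if -p < i ∧ i < p then i
  else if N < i ∨ i < -N then i
  else if 0 < i then i + 1 else i - 1

lemma unslide_slide {p N m : ℤ} (hp : 1 ≤ p) (hN : p ≤ N) (hm : m = N ∨ m = -N) (i : ℤ) :
    unslide p N m (slide p N m i) = i := by
  unfold slide
  split_ifs <;> unfold unslide <;> split_ifs <;> omega

lemma slide_unslide {p N m : ℤ} (hp : 1 ≤ p) (hN : p ≤ N) (hm : m = N ∨ m = -N) (i : ℤ) :
    slide p N m (unslide p N m i) = i := by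
  unfold unslide
  split_ifs <;> unfold slide <;> split_ifs <;> omega

/-- The signed permutation `c` with window `1 ⋯ g, ±(n+1), g+1 ⋯ n`; the sign is `+` when `s` is
`true`. If `w` fixes `n+1`, then `w * insCycle n g s` is the window of `w` with `±(n+1)` inserted
in gap `g`, that is, between positions `g` and `g+1`. -/
def insCycle (n : ℕ) (g : Fin (n + 1)) (s : Bool) : Equiv.Perm ℤ where
  toFun := slide ((g : ℕ) + 1) (n + 1) (insVal n s)
  invFun := unslide ((g : ℕ) + 1) (n + 1) (insVal n s)
  left_inv := unslide_slide (by omega) (by have := g.2; omega) (insVal_eq n s)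
  right_inv := slide_unslide (by omega) (by have := g.2; omega) (insVal_eq n s)

lemma insCycle_at (n : ℕ) (g : Fin (n + 1)) (s : Bool) :
    insCycle n g s ((g : ℕ) + 1) = insVal n s := by
  simp [insCycle, slide]

lemma insCycle_low (n : ℕ) (g : Fin (n + 1)) (s : Bool) (i : ℕ) (hi : i ≤ g) :
    insCycle n g s i = i := by
  simp only [insCycle, Equiv.coe_fn_mk, slide]
  split_ifs <;> omega

lemma insCycle_high (n : ℕ) (g : Fin (n + 1)) (s : Bool) (i : ℕ) (hi : (g : ℕ) < i) (hn : i ≤ n) :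
    insCycle n g s ((i : ℤ) + 1) = i := by
  simp only [insCycle, Equiv.coe_fn_mk, slide]
  split_ifs <;> omega

lemma insCycle_neg (n : ℕ) (g : Fin (n + 1)) (s : Bool) (i : ℤ) :
    insCycle n g s (-i) = - insCycle n g s i := by
  have hg := g.2
  simp only [insCycle, Equiv.coe_fn_mk]
  generalize insVal n s = m
  by_cases h0 : i = 0
  · subst h0
    simp only [slide]
    split_ifs <;> omega
  · unfold slide
    split_ifs <;> omega

lemma insCycle_far (n : ℕ) (g : Fin (n + 1)) (s : Bool) (i : ℤ) (hi : ((n + 1 : ℕ) : ℤ) < |i|) :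
    insCycle n g s i = i := by
  have := g.2
  rw [lt_abs] at hi
  simp only [insCycle, Equiv.coe_fn_mk, slide]
  split_ifs <;> omega

/-- `insCycle` preserves the sign of every entry other than `±(n+1)`. -/
lemma insCycle_pos (n : ℕ) (g : Fin (n + 1)) (s : Bool) (i : ℤ)
    (h : |insCycle n g s i| ≤ n) : 0 < insCycle n g s i ↔ 0 < i := by
  have := g.2
  have hm := insVal_eq n s
  rw [abs_le] at h
  revert h
  simp only [insCycle, Equiv.coe_fn_mk, slide]
  split_ifs <;> omega

lemma IsSignedPerm.abs_le {n : ℕ} {w : Equiv.Perm ℤ} (h : IsSignedPerm n w) {i : ℤ}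
    (hi : |i| ≤ n) : |w i| ≤ n := by
  by_contra! hc
  have := w.injective (h.2 _ hc)
  rw [this] at hc
  omega

lemma IsSignedPerm.zero {n : ℕ} {w : Equiv.Perm ℤ} (h : IsSignedPerm n w) : w 0 = 0 := by
  have := h.1 0
  simp at this
  omega

lemma IsSignedPerm.symm {n : ℕ} {w : Equiv.Perm ℤ} (h : IsSignedPerm n w) :
    IsSignedPerm n w.symm := by
  refine ⟨fun i => ?_, fun i hi => ?_⟩
  · rw [Equiv.symm_apply_eq, h.1, Equiv.apply_symm_apply]
  · rw [Equiv.symm_apply_eq, h.2 i hi]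

lemma IsSignedPerm.succ {n : ℕ} {w : Equiv.Perm ℤ} (h : IsSignedPerm n w) :
    IsSignedPerm (n + 1) w :=
  ⟨h.1, fun i hi => h.2 i (by push_cast at hi; omega)⟩

lemma IsSignedPerm.mul {n : ℕ} {u w : Equiv.Perm ℤ} (hu : IsSignedPerm n u)
    (hw : IsSignedPerm n w) : IsSignedPerm n (u * w) := by
  refine ⟨fun i => ?_, fun i hi => ?_⟩
  · simp [hw.1, hu.1]
  · simp [hw.2 i hi, hu.2 i hi]

lemma insCycle_isSignedPerm (n : ℕ) (g : Fin (n + 1)) (s : Bool) :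
    IsSignedPerm (n + 1) (insCycle n g s) :=
  ⟨insCycle_neg n g s, insCycle_far n g s⟩

/-- Since `1 ≤ n`, inserting `±(n+1)` does not change the sign of the entry `±1`. -/
lemma inXn_mul_insCycle {n : ℕ} (hn : 1 ≤ n) {w : Equiv.Perm ℤ} (hw : IsSignedPerm n w)
    (g : Fin (n + 1)) (s : Bool) : InXn (n + 1) (w * insCycle n g s) ↔ InXn n w := by
  have h1 : |w.symm 1| ≤ n := hw.symm.abs_le (by simpa using hn)
  have h2 : 0 < (w * insCycle n g s).symm 1 ↔ 0 < w.symm 1 := by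
    have e : insCycle n g s ((w * insCycle n g s).symm 1) = w.symm 1 := by
      rw [Equiv.eq_symm_apply]
      exact (w * insCycle n g s).apply_symm_apply 1
    rw [← insCycle_pos n g s _ (by rw [e]; exact h1), e]
  unfold InXn
  rw [h2]
  simp [hw, hw.succ.mul (insCycle_isSignedPerm n g s)]

/-- Every element of `𝔅_{n+1}` arises from `𝔅_n` by an insertion. -/
lemma exists_insCycle {n : ℕ} {u : Equiv.Perm ℤ} (hu : IsSignedPerm (n + 1) u) :
    ∃ w g s, IsSignedPerm n w ∧ u = w * insCycle n g s := by
  set j := u.symm ((n : ℤ) + 1) with hj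
  have hjn : |j| ≤ ((n + 1 : ℕ) : ℤ) := hu.symm.abs_le (by push_cast; rw [abs_le]; omega)
  have huj : u j = (n : ℤ) + 1 := by simp [hj]
  have hj0 : j ≠ 0 := by
    intro h
    rw [h, hu.zero] at huj
    omega
  rw [_root_.abs_le] at hjn
  push_cast at hjn
  obtain ⟨g, s, hc⟩ : ∃ (g : Fin (n + 1)) (s : Bool), insCycle n g s j = (n : ℤ) + 1 := by
    rcases lt_or_gt_of_ne hj0 with h | h
    · refine ⟨⟨(-j - 1).toNat, by omega⟩, false, ?_⟩
      have := insCycle_neg n ⟨(-j - 1).toNat, by omega⟩ false (-j)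
      have e : (((-j - 1).toNat : ℕ) : ℤ) + 1 = -j := by omega
      have h2 := insCycle_at n ⟨(-j - 1).toNat, by omega⟩ false
      simp only [e, insVal] at h2
      rw [h2] at this
      simpa using this
    · refine ⟨⟨(j - 1).toNat, by omega⟩, true, ?_⟩
      have e : (((j - 1).toNat : ℕ) : ℤ) + 1 = j := by omega
      have h2 := insCycle_at n ⟨(j - 1).toNat, by omega⟩ true
      simp only [e, insVal] at h2
      simpa using h2
  -- `c = insCycle n g s` agrees with `u` on `j = u⁻¹(n+1)`, so `u * c⁻¹` fixes `n+1`
  refine ⟨u * (insCycle n g s).symm, g, s, ?_, ?_⟩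
  · have hs := hu.mul (insCycle_isSignedPerm n g s).symm
    refine ⟨hs.1, fun i hi => ?_⟩
    have hfix : (u * (insCycle n g s).symm) ((n : ℤ) + 1) = (n : ℤ) + 1 := by
      rw [Equiv.Perm.mul_apply, ← hc, Equiv.symm_apply_apply, huj, hc]
    by_cases hi' : ((n + 1 : ℕ) : ℤ) < |i|
    · exact hs.2 i hi'
    · have : |i| = (n : ℤ) + 1 := by push_cast at hi'; omega
      rcases abs_eq (by omega) |>.1 this with h | h
      · rw [h, hfix]
      · rw [h, hs.1, hfix]
  · ext i
    simp

lemma ins_low {n : ℕ} (w : Equiv.Perm ℤ) (g : Fin (n + 1)) (s : Bool) (i : ℕ) (hi : i ≤ g) :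
    (w * insCycle n g s) i = w i := by
  rw [Equiv.Perm.mul_apply, insCycle_low n g s i hi]

lemma ins_at {n : ℕ} {w : Equiv.Perm ℤ} (hw : IsSignedPerm n w) (g : Fin (n + 1)) (s : Bool) :
    (w * insCycle n g s) ((g : ℕ) + 1) = insVal n s := by
  rw [Equiv.Perm.mul_apply, insCycle_at]
  exact hw.2 _ (by cases s <;> simp [insVal, lt_abs])

lemma ins_high {n : ℕ} (w : Equiv.Perm ℤ) (g : Fin (n + 1)) (s : Bool) (i : ℕ) (hi : (g : ℕ) < i)
    (hn : i ≤ n) : (w * insCycle n g s) ((i : ℤ) + 1) = w i := by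
  rw [Equiv.Perm.mul_apply, insCycle_high n g s i hi hn]

lemma entry_bounds {n : ℕ} {w : Equiv.Perm ℤ} (hw : IsSignedPerm n w) (i : ℕ) (hi : i ≤ n) :
    -(n : ℤ) ≤ w i ∧ w i ≤ n :=
  _root_.abs_le.1 (hw.abs_le (by simpa using hi))

/-- The pair (smaller signed permutation, insertion place) is determined by the result. -/
lemma insCycle_injective {n : ℕ} {w w' : Equiv.Perm ℤ} {g g' : Fin (n + 1)} {s s' : Bool}
    (hw : IsSignedPerm n w) (hw' : IsSignedPerm n w')
    (h : w * insCycle n g s = w' * insCycle n g' s') : w = w' ∧ g = g' ∧ s = s' := by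
  have e1 := ins_at hw g s
  have e2 := ins_at hw' g' s'
  rw [h] at e1
  have hu := hw'.succ.mul (insCycle_isSignedPerm n g' s')
  have hgs : g = g' ∧ s = s' := by
    have aux : ∀ (a b : ℕ), (w' * insCycle n g' s') ((a : ℤ) + 1)
        = -(w' * insCycle n g' s') ((b : ℤ) + 1) → False := by
      intro a b hab
      rw [← hu.1] at hab
      have := (w' * insCycle n g' s').injective hab
      omega
    by_cases hs : s = s'
    · subst hs
      have := (w' * insCycle n g' s).injective (e1.trans e2.symm)
      exact ⟨Fin.ext (by omega), rfl⟩
    · exfalso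
      apply aux g g'
      rw [e1, e2]
      revert hs
      cases s <;> cases s' <;> simp [insVal]
  obtain ⟨rfl, rfl⟩ := hgs
  exact ⟨mul_right_cancel h, rfl, rfl⟩

lemma inXn_one_iff (w : Equiv.Perm ℤ) : InXn 1 w ↔ w = 1 := by
  constructor
  · rintro ⟨hw, hp⟩
    have h1 : |w.symm 1| ≤ (1 : ℕ) := hw.symm.abs_le (by simp)
    have h2 : w.symm 1 = 1 := by
      rw [_root_.abs_le] at h1
      push_cast at h1
      omega
    have h3 : w 1 = 1 := ((Equiv.symm_apply_eq w).1 h2).symm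
    ext i
    simp only [Equiv.Perm.coe_one, id]
    by_cases hi : ((1 : ℕ) : ℤ) < |i|
    · exact hw.2 i hi
    · rw [not_lt, _root_.abs_le] at hi
      push_cast at hi
      obtain rfl | rfl | rfl : i = -1 ∨ i = 0 ∨ i = 1 := by omega
      · rw [hw.1, h3]
      · exact hw.zero
      · exact h3
  · rintro rfl
    exact ⟨⟨fun _ => rfl, fun _ _ => rfl⟩, zero_lt_one⟩

/-- The set `X_{n+1}` as a finite set, built from `X_1 = {id}` by repeated insertion. -/
noncomputable def xFin : ℕ → Finset (Equiv.Perm ℤ)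
  | 0 => {1}
  | n + 1 => (xFin n ×ˢ (Finset.univ : Finset (Fin (n + 1 + 1) × Bool))).image
      fun p => p.1 * insCycle (n + 1) p.2.1 p.2.2

lemma mem_xFin (n : ℕ) (w : Equiv.Perm ℤ) : w ∈ xFin n ↔ InXn (n + 1) w := by
  induction n generalizing w with
  | zero => simp [xFin, inXn_one_iff]
  | succ n ih =>
    simp only [xFin, Finset.mem_image, Finset.mem_product, Finset.mem_univ, and_true, ih]
    constructor
    · rintro ⟨⟨v, g, s⟩, hv, rfl⟩
      exact (inXn_mul_insCycle (by omega) hv.1 g s).2 hv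
    · intro hw
      obtain ⟨v, g, s, hv, rfl⟩ := exists_insCycle hw.1
      exact ⟨⟨v, g, s⟩, (inXn_mul_insCycle (by omega) hv g s).1 hw, rfl⟩

lemma sum_xFin_succ (n : ℕ) (F : Equiv.Perm ℤ → ℤ) :
    ∑ u ∈ xFin (n + 1), F u =
      ∑ w ∈ xFin n, ∑ p : Fin (n + 1 + 1) × Bool, F (w * insCycle (n + 1) p.1 p.2) := by
  rw [xFin, Finset.sum_image, Finset.sum_product]
  rintro ⟨v, g, s⟩ hv ⟨v', g', s'⟩ hv' h
  simp only [Finset.coe_product, Set.mem_prod, Finset.mem_coe, mem_xFin] at hv hv'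
  obtain ⟨rfl, rfl, rfl⟩ := insCycle_injective hv.1.1 hv'.1.1 h
  rfl

/-! ### Gap statistics of Eulerian type -/

/-- The number of gaps `g ∈ {0, …, n}` of the window of `w` marked by `P n w`. -/
noncomputable def gapStat (P : ℕ → Equiv.Perm ℤ → ℕ → Prop) (n : ℕ) (w : Equiv.Perm ℤ) : ℕ :=
  ((Finset.range (n + 1)).filter (P n w)).card

/-- The rule by which a gap statistic of Eulerian type changes under insertion of `±(n+1)`:
gaps other than the one used keep their marks, and of the two new gaps exactly one is marked,
except for a single insertion, into an unmarked gap, which leaves both new gaps unmarked. -/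
structure EulerianGaps (P : ℕ → Equiv.Perm ℤ → ℕ → Prop) : Prop where
  base : gapStat P 1 1 = 0
  left : ∀ n w, 1 ≤ n → IsSignedPerm n w → ∀ (g : Fin (n + 1)) s (h : ℕ), h < g →
    (P (n + 1) (w * insCycle n g s) h ↔ P n w h)
  right : ∀ n w, 1 ≤ n → IsSignedPerm n w → ∀ (g : Fin (n + 1)) s (h : ℕ), (g : ℕ) < h → h ≤ n →
    (P (n + 1) (w * insCycle n g s) (h + 1) ↔ P n w h)
  new : ∀ n w, 1 ≤ n → IsSignedPerm n w → ∃ q : Fin (n + 1) × Bool, ¬ P n w q.1 ∧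
    ∀ (g : Fin (n + 1)) s,
      ((g, s) = q → ¬ P (n + 1) (w * insCycle n g s) g ∧
        ¬ P (n + 1) (w * insCycle n g s) (g + 1)) ∧
      ((g, s) ≠ q → (P (n + 1) (w * insCycle n g s) g ↔
        ¬ P (n + 1) (w * insCycle n g s) (g + 1)))

lemma sum_range_insert (A B : ℕ → ℕ) {n g : ℕ} (hg : g ≤ n) (hl : ∀ h < g, A h = B h)
    (hr : ∀ h, g < h → h ≤ n → A (h + 1) = B h) :
    ∑ h ∈ Finset.range (n + 1 + 1), A h + B g =
      ∑ h ∈ Finset.range (n + 1), B h + A g + A (g + 1) := by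
  obtain ⟨m, rfl⟩ := Nat.exists_eq_add_of_le hg
  rw [show g + m + 1 + 1 = (g + 1 + 1) + m by omega, show g + m + 1 = (g + 1) + m by omega,
    Finset.sum_range_add A (g + 1 + 1) m, Finset.sum_range_add B (g + 1) m,
    Finset.sum_range_succ A (g + 1), Finset.sum_range_succ A g, Finset.sum_range_succ B g,
    Finset.sum_congr rfl fun x hx => hl x (Finset.mem_range.1 hx)]
  have h2 : ∑ x ∈ Finset.range m, A (g + 1 + 1 + x) = ∑ x ∈ Finset.range m, B (g + 1 + x) := by
    refine Finset.sum_congr rfl fun x hx => ?_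
    rw [Finset.mem_range] at hx
    rw [← hr (g + 1 + x) (by omega) (by omega)]
    congr 1
    omega
  rw [h2]
  ring

/-- Insertion into gap `g` replaces the mark of that gap by the marks of the two new gaps. -/
lemma gapStat_insert {P : ℕ → Equiv.Perm ℤ → ℕ → Prop} (hP : EulerianGaps P) {n : ℕ} (hn : 1 ≤ n)
    {w : Equiv.Perm ℤ} (hw : IsSignedPerm n w) (g : Fin (n + 1)) (s : Bool) :
    gapStat P (n + 1) (w * insCycle n g s) + (if P n w g then 1 else 0) =
      gapStat P n w + (if P (n + 1) (w * insCycle n g s) g then 1 else 0)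
        + (if P (n + 1) (w * insCycle n g s) (g + 1) then 1 else 0) := by
  simp only [gapStat, Finset.card_filter]
  refine sum_range_insert (fun h => if P (n + 1) (w * insCycle n g s) h then 1 else 0)
    (fun h => if P n w h then 1 else 0) (by have := g.2; omega) (fun h hh => ?_)
    fun h hh hn' => ?_
  · simp only [hP.left n w hn hw g s h hh]
  · simp only [hP.right n w hn hw g s h hh hn']

/-- The operator on test functions encoding the type B Eulerian recurrence: of the `2(n+1)`
insertions into an element with statistic `a`, exactly `2a + 1` keep the statistic and the others
raise it by one. -/
def eulerStep (n : ℕ) (G : ℕ → ℤ) (a : ℕ) : ℤ :=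
  2 * a * G a + 2 * (n + 1 - a) * G (a + 1) - G (a + 1) + G a

/-- The sum of `G` over all insertions into `w`. Each of the `2(n+1)` insertions would turn the
statistic `a` into `a` or `a + 1` according to whether its gap is marked, except that the special
insertion keeps `a` although its gap is unmarked. -/
lemma sum_insert {P : ℕ → Equiv.Perm ℤ → ℕ → Prop} (hP : EulerianGaps P) {n : ℕ} (hn : 1 ≤ n)
    {w : Equiv.Perm ℤ} (hw : IsSignedPerm n w) (G : ℕ → ℤ) :
    ∑ p : Fin (n + 1) × Bool, G (gapStat P (n + 1) (w * insCycle n p.1 p.2)) =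
      eulerStep n G (gapStat P n w) := by
  obtain ⟨q, hq, hnew⟩ := hP.new n w hn hw
  set a := gapStat P n w with ha
  have key : ∀ p : Fin (n + 1) × Bool, G (gapStat P (n + 1) (w * insCycle n p.1 p.2)) =
      (if P n w p.1 then G a else G (a + 1)) + (if p = q then G a - G (a + 1) else 0) := by
    rintro ⟨g, s⟩
    have h := gapStat_insert hP hn hw g s
    obtain ⟨h1, h2⟩ := hnew g s
    rw [← ha] at h
    by_cases hgs : (g, s) = q
    · have h0 : ¬ P n w g := by rw [← hgs] at hq; exact hq
      simp only [h0, (h1 hgs).1, (h1 hgs).2, if_false, add_zero] at h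
      simp [h, h0, hgs]
    · have h3 := h2 hgs
      by_cases h4 : P (n + 1) (w * insCycle n g s) (g + 1) <;>
        by_cases h0 : P n w g <;>
        simp only [h4, h0, not_true_eq_false, not_false_eq_true, iff_false, iff_true, if_true,
          if_false] at h h3 <;>
        simp only [h3, if_true, if_false, add_zero, add_left_inj] at h <;>
        simp [h, hgs, h0]
  have hcount : ∑ g : Fin (n + 1), (if P n w g then G a else G (a + 1)) =
      a * G a + (n + 1 - a) * G (a + 1) := by
    rw [Fin.sum_univ_eq_sum_range (fun g => if P n w g then G a else G (a + 1)) (n + 1),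
      Finset.sum_ite, Finset.sum_const, Finset.sum_const]
    have h5 := Finset.card_filter_add_card_filter_not (s := Finset.range (n + 1)) (P n w)
    rw [Finset.card_range] at h5
    have h6 : (((Finset.range (n + 1)).filter fun x => ¬ P n w x).card : ℤ) = n + 1 - a := by
      rw [ha, gapStat]
      omega
    rw [nsmul_eq_mul, nsmul_eq_mul, h6, ha, gapStat]
  rw [Finset.sum_congr rfl fun p _ => key p, Finset.sum_add_distrib, Fintype.sum_prod_type]
  simp only [Fintype.sum_bool, Finset.sum_add_distrib, hcount, Finset.sum_ite_eq',
    Finset.mem_univ, if_true, eulerStep]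
  ring

/-- The sum of a test function over `X_{n+1}`, as forced by the Eulerian recurrence. -/
def eulerSum : ℕ → (ℕ → ℤ) → ℤ
  | 0, G => G 0
  | n + 1, G => eulerSum n (eulerStep (n + 1) G)

/-- The distribution of a gap statistic of Eulerian type on `X_{n+1}` does not depend on the
statistic. -/
lemma sum_gapStat {P : ℕ → Equiv.Perm ℤ → ℕ → Prop} (hP : EulerianGaps P) (n : ℕ) (G : ℕ → ℤ) :
    ∑ w ∈ xFin n, G (gapStat P (n + 1) w) = eulerSum n G := by
  induction n generalizing G with
  | zero => simp [xFin, eulerSum, hP.base]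
  | succ n ih =>
    rw [sum_xFin_succ, eulerSum, ← ih]
    refine Finset.sum_congr rfl fun w hw => ?_
    exact sum_insert hP (by omega) ((mem_xFin n w).1 hw).1 G

lemma ncard_gapStat {P : ℕ → Equiv.Perm ℤ → ℕ → Prop} (hP : EulerianGaps P) (n k : ℕ) :
    ({w : Equiv.Perm ℤ | InXn (n + 1) w ∧ gapStat P (n + 1) w = k}.ncard : ℤ) =
      eulerSum n fun a => if a = k then 1 else 0 := by
  rw [← sum_gapStat hP, Finset.sum_boole]
  rw [← Set.ncard_coe_finset]
  congr 2
  ext w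
  simp [mem_xFin]

/-! ### Descents and big ascents as gap statistics -/

/-- Gap `g` carries a type B descent; the last gap never does. -/
def desGap (n : ℕ) (w : Equiv.Perm ℤ) (g : ℕ) : Prop :=
  g < n ∧ w ((g : ℤ) + 1) < w g

/-- Gap `g` carries a big ascent; gap `0` stands for the index `-1`, and gap `n` for `n`. -/
def bascGap (n : ℕ) (w : Equiv.Perm ℤ) (g : ℕ) : Prop :=
  if g = 0 then 2 ≤ w 1 else if g = n then w n ≤ -2 else Lll (w g) (w ((g : ℤ) + 1))

lemma gapStat_desGap (n : ℕ) (w : Equiv.Perm ℤ) : gapStat desGap n w = desB n w := by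
  unfold gapStat desB
  -- the index set of `desB` is `range n` pushed into `ℤ` by the monadic coercion of finsets
  have e : (do let a ← Finset.range n; pure (a : ℤ)) =
      (Finset.range n).image fun g : ℕ => (g : ℤ) := by
    ext i
    simp [Finset.bind_def]
  rw [e, Finset.card_filter, Finset.card_filter,
    Finset.sum_image (by intro a _ b _ h; simpa using h), Finset.sum_range_succ]
  simp only [desGap, lt_irrefl, false_and, if_false, add_zero]
  refine Finset.sum_congr rfl fun g hg => ?_
  simp [Finset.mem_range.1 hg]

lemma gapStat_bascGap (n : ℕ) (w : Equiv.Perm ℤ) : gapStat bascGap n w = basc n w := by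
  unfold gapStat basc
  have e : Finset.Icc (1 : ℤ) n = (Finset.range n).image fun g : ℕ => (g : ℤ) + 1 := by
    ext i
    simp only [Finset.mem_Icc, Finset.mem_image, Finset.mem_range]
    constructor
    · intro h
      exact ⟨(i - 1).toNat, by omega, by omega⟩
    · rintro ⟨a, h, rfl⟩
      omega
  rw [Finset.card_filter, Finset.card_filter, Finset.sum_insert (by simp), e,
    Finset.sum_image (f := fun i : ℤ => if (if i = -1 then 2 ≤ w 1 else if i = (n : ℤ) then
      w (n : ℤ) ≤ -2 else Lll (w i) (w (i + 1))) then 1 else 0)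
      (by intro a _ b _ h; simpa using h), Finset.sum_range_succ', add_comm]
  congr 1
  · simp [bascGap]
  refine Finset.sum_congr rfl fun g _ => ?_
  have h1 : ¬ ((g : ℤ) + 1 = -1) := by omega
  have h2 : ((g : ℤ) + 1 = n) ↔ g + 1 = n := by omega
  simp [bascGap, h1, h2]

lemma eulerianGaps_desGap : EulerianGaps desGap where
  base := by
    rw [gapStat_desGap]
    simp [desB]
  left n w hn hw g s h hg := by
    have := g.2
    have e1 := ins_low w g s h hg.le
    have e2 := ins_low w g s (h + 1) hg
    simp only [Nat.cast_add, Nat.cast_one] at e2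
    unfold desGap
    rw [e1, e2]
    constructor <;> rintro ⟨-, h⟩ <;> exact ⟨by omega, h⟩
  right n w hn hw g s h hg hh := by
    unfold desGap
    by_cases hn' : h = n
    · simp [hn']
    · have e1 := ins_high w g s h hg hh
      have e2 := ins_high w g s (h + 1) (by omega) (by omega)
      simp only [Nat.cast_add, Nat.cast_one] at e2 ⊢
      rw [e1, e2]
      simp
  new n w hn hw := by
    -- appending `n+1` at the end is the only insertion creating no descent
    refine ⟨(Fin.last n, true), by simp [desGap], fun g s => ?_⟩
    have hg := g.2
    have e1 := ins_low w g s g le_rfl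
    have e2 := ins_at hw g s
    have b1 := entry_bounds hw g (by omega)
    unfold desGap
    simp only [Nat.cast_add, Nat.cast_one]
    rw [e1, e2]
    by_cases hl : (g : ℕ) = n
    · obtain rfl : g = Fin.last n := Fin.ext hl
      cases s <;> simp [insVal] at b1 ⊢ <;> omega
    · have e3 := ins_high w g s (g + 1) (by omega) (by omega)
      have b2 := entry_bounds hw (g + 1) (by omega)
      have hl' : g ≠ Fin.last n := fun h => hl (by simp [h])
      simp only [Nat.cast_add, Nat.cast_one] at e3 b2
      rw [e3]
      have : (g : ℕ) < n := by omega
      cases s <;> simp [insVal, hl', this] at b1 b2 ⊢ <;> omega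

lemma lll_iff (a b : ℤ) : Lll a b ↔ a + 2 ≤ b ∧ ¬ (a = -1 ∧ b = 1) := by
  constructor
  · rintro ⟨c, hc⟩
    omega
  · intro h
    by_cases ha : a = -1
    · exact ⟨1, by omega⟩
    · exact ⟨a + 1, by omega⟩

/-- Exactly one insertion places `n+1` directly after the entry `n` or `-(n+1)` directly before the
entry `-n`, since exactly one of `±n` occurs in the window. -/
lemma exists_special {n : ℕ} {w : Equiv.Perm ℤ} (hn : 1 ≤ n) (hw : IsSignedPerm n w) :
    ∃ q : Fin (n + 1) × Bool, ∀ (g : Fin (n + 1)) s,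
      (g, s) = q ↔ (s = true ∧ w (g : ℕ) = n ∨ s = false ∧ w ((g : ℕ) + 1) = -n) := by
  set j := w.symm n with hj
  have hjn : |j| ≤ n := hw.symm.abs_le (by simp)
  rw [_root_.abs_le] at hjn
  have hj0 : j ≠ 0 := by
    intro h
    have := (Equiv.symm_apply_eq w).1 (hj.symm.trans h)
    rw [hw.zero] at this
    omega
  have h1 : ∀ i : ℤ, w i = n ↔ i = j := fun i => by rw [hj, Equiv.eq_symm_apply]
  have h2 : ∀ i : ℤ, w i = -n ↔ i = -j := fun i => by
    rw [← neg_eq_iff_eq_neg, ← hw.1, h1, neg_eq_iff_eq_neg]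
  simp only [h1, h2]
  rcases lt_or_gt_of_ne hj0 with h | h
  · refine ⟨(⟨(-j - 1).toNat, by omega⟩, false), fun g s => ?_⟩
    cases s <;> simp [Fin.ext_iff] <;> omega
  · refine ⟨(⟨j.toNat, by omega⟩, true), fun g s => ?_⟩
    cases s <;> simp [Fin.ext_iff] <;> omega

lemma eulerianGaps_bascGap : EulerianGaps bascGap where
  base := by
    rw [gapStat, Finset.card_eq_zero, Finset.filter_eq_empty_iff]
    intro x hx
    have : x = 0 ∨ x = 1 := by simp at hx; omega
    rcases this with rfl | rfl <;> simp [bascGap]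
  left n w hn hw g s h hg := by
    have := g.2
    have e1 := ins_low w g s h hg.le
    have e2 := ins_low w g s (h + 1) hg
    simp only [Nat.cast_add, Nat.cast_one] at e2
    unfold bascGap
    rw [e1, e2]
    by_cases h0 : h = 0
    · subst h0
      have e3 := ins_low w g s 1 hg
      simp only [Nat.cast_one] at e3
      simp [e3]
    · rw [if_neg h0, if_neg h0, if_neg (by omega : ¬ h = n + 1), if_neg (by omega : ¬ h = n)]
  right n w hn hw g s h hg hh := by
    have e1 := ins_high w g s h hg hh
    unfold bascGap
    simp only [Nat.cast_add, Nat.cast_one]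
    rw [if_neg (by omega : ¬ h + 1 = 0), if_neg (by omega : ¬ h = 0)]
    by_cases hn' : h = n
    · subst hn'
      simp [e1]
    · have e2 := ins_high w g s (h + 1) (by omega) (by omega)
      simp only [Nat.cast_add, Nat.cast_one] at e2
      rw [if_neg (by omega : ¬ h + 1 = n + 1), if_neg hn', e1, e2]
  new n w hn hw := by
    -- `±(n+1)` forms a big ascent with exactly one neighbour unless that neighbour is `±n`
    obtain ⟨q, hq⟩ := exists_special hn hw
    have hlast : w ((n : ℤ) + 1) = n + 1 := hw.2 _ (by rw [lt_abs]; omega)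
    refine ⟨q, ?_, fun g s => ?_⟩
    · obtain ⟨g, s⟩ := q
      have hg := g.2
      have hs := (hq g s).1 rfl
      have b1 := entry_bounds hw g (by omega)
      unfold bascGap
      dsimp only
      by_cases h0 : (g : ℕ) = 0
      · rw [if_pos h0]
        simp only [h0, Nat.cast_zero, hw.zero, zero_add] at hs
        omega
      · rw [if_neg h0]
        by_cases hl : (g : ℕ) = n
        · rw [if_pos hl]
          rw [hl] at hs
          omega
        · have b2 := entry_bounds hw (g + 1) (by omega)
          simp only [Nat.cast_add, Nat.cast_one] at b2
          rw [if_neg hl, lll_iff]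
          omega
    · have hg := g.2
      have hs := hq g s
      have e1 := ins_low w g s g le_rfl
      have e2 := ins_at hw g s
      have b1 := entry_bounds hw g (by omega)
      have hx : s = true ∧ insVal n s = n + 1 ∨ s = false ∧ insVal n s = -((n : ℤ) + 1) := by
        cases s <;> simp [insVal]
      have left : bascGap (n + 1) (w * insCycle n g s) g ↔ s = true ∧ w (g : ℕ) ≠ n := by
        unfold bascGap
        by_cases h0 : (g : ℕ) = 0
        · simp only [h0, Nat.cast_zero, zero_add] at e2
          rw [if_pos h0, e2, h0, Nat.cast_zero, hw.zero]
          rcases hx with ⟨rfl, hx⟩ | ⟨rfl, hx⟩ <;> simp [hx] <;> omega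
        · rw [if_neg h0, if_neg (by omega : ¬ (g : ℕ) = n + 1), e1, e2, lll_iff]
          rcases hx with ⟨rfl, hx⟩ | ⟨rfl, hx⟩ <;> simp [hx] <;> omega
      have right : bascGap (n + 1) (w * insCycle n g s) (g + 1) ↔
          s = false ∧ w ((g : ℕ) + 1) ≠ -n := by
        unfold bascGap
        rw [if_neg (by omega : ¬ (g : ℕ) + 1 = 0)]
        by_cases hl : (g : ℕ) = n
        · rw [if_pos (by omega : (g : ℕ) + 1 = n + 1)]
          simp only [Nat.cast_add, Nat.cast_one, hl] at e2 ⊢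
          rw [e2, hlast]
          rcases hx with ⟨rfl, hx⟩ | ⟨rfl, hx⟩ <;> simp [hx] <;> omega
        · have e3 := ins_high w g s (g + 1) (by omega) (by omega)
          have b2 := entry_bounds hw (g + 1) (by omega)
          simp only [Nat.cast_add, Nat.cast_one] at e3 b2 ⊢
          rw [if_neg (by omega : ¬ (g : ℕ) + 1 = n + 1), e2, e3, lll_iff]
          rcases hx with ⟨rfl, hx⟩ | ⟨rfl, hx⟩ <;> simp [hx] <;> omega
      rw [left, right, ne_eq (g, s), hs]
      cases s <;> simp

/-- For every `n ≥ 1`, the statistics `basc` and `des_B` are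
equidistributed on `X_n`: for every `k ≥ 0`,
`#{w ∈ X_n : basc(w) = k} = #{w ∈ X_n : des_B(w) = k}`. -/
theorem basc_desB_equidistributed (n : ℕ) (hn : 1 ≤ n) (k : ℕ) :
    psiN n k = {w : Equiv.Perm ℤ | InXn n w ∧ desB n w = k}.ncard := by
  obtain ⟨m, rfl⟩ : ∃ m, n = m + 1 := ⟨n - 1, by omega⟩
  have h1 := ncard_gapStat eulerianGaps_bascGap m k
  have h2 := ncard_gapStat eulerianGaps_desGap m k
  simp only [gapStat_bascGap] at h1
  simp only [gapStat_desGap] at h2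
  rw [psiN]
  exact_mod_cast h1.trans h2.symm
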